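/- arXiv:2301.03116 — 5 statements merged into one kernel-verified Lean document; each statement's English description precedes it below -/
import Mathlib

section
/- Let E be a real inner product space, let l : E → ℝ, let θ ∈ E, let L > 0 and let α satisfy 0 < α < 2/L. Suppose l is differentiable with base-point L-Lipschitz gradient on the closed ball of radius α·‖∇l(θ)‖ around θ. Let ε satisfy 0 ≤ ε < α·‖∇l(θ)‖ and set Δ = ‖∇l(θ)‖·ε + ε²/(2Lα² − 4α). Then the one-step gradient descent iterate θ' = θ − α·∇l(θ) satisfies l(θ') ≤ l(θ) − Δ. -/
theorem one_step_descent_with_Delta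
    {E : Type*} [NormedAddCommGroup E] [InnerProductSpace ℝ E] [CompleteSpace E]
    (l : E → ℝ) (θ : E) (L α : ℝ) (hL : 0 < L) (hα : 0 < α) (hα2 : α < 2 / L)
    (hdiff : ∀ θ' : E, ‖θ' - θ‖ ≤ α * ‖gradient l θ‖ → DifferentiableAt ℝ l θ')
    (hlip : ∀ θ' : E, ‖θ' - θ‖ ≤ α * ‖gradient l θ‖ →
      ‖gradient l θ' - gradient l θ‖ ≤ L * ‖θ' - θ‖)
    (ε : ℝ) (hε0 : 0 ≤ ε) (hε1 : ε < α * ‖gradient l θ‖)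
    (Δ : ℝ) (hΔ : Δ = ‖gradient l θ‖ * ε + ε ^ 2 / (2 * L * α ^ 2 - 4 * α)) :
    l (θ - α • gradient l θ) ≤ l θ - Δ := by
  have hc : 0 < 2 * α - L * α ^ 2 := by
    have h : α * L < 2 := (lt_div_iff₀ hL).1 hα2
    nlinarith
  set g := gradient l θ with hg
  have hball : ∀ t ∈ Set.Icc (0 : ℝ) α, ‖(θ - t • g) - θ‖ ≤ α * ‖g‖ := by
    intro t ht
    have : (θ - t • g) - θ = -(t • g) := by abel
    rw [this, norm_neg, norm_smul, Real.norm_eq_abs, abs_of_nonneg ht.1]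
    exact mul_le_mul_of_nonneg_right ht.2 (norm_nonneg _)
  have hder : ∀ t ∈ Set.Icc (0 : ℝ) α,
      HasDerivAt (fun t : ℝ => l (θ - t • g) + (t * ‖g‖ ^ 2 - L * ‖g‖ ^ 2 / 2 * t ^ 2))
        (inner ℝ (gradient l (θ - t • g)) (-g) + (‖g‖ ^ 2 - L * ‖g‖ ^ 2 * t)) t := by
    intro t ht
    have h1 := (hdiff _ (hball t ht)).hasGradientAt.hasFDerivAt
    have h2 : HasDerivAt (fun t : ℝ => θ - t • g) (-g) t := by
      simpa using ((hasDerivAt_id t).smul_const g).const_sub θ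
    have h3 := h1.comp_hasDerivAt t h2
    have h4 : HasDerivAt (fun t : ℝ => t * ‖g‖ ^ 2 - L * ‖g‖ ^ 2 / 2 * t ^ 2)
        (‖g‖ ^ 2 - L * ‖g‖ ^ 2 * t) t := by
      have := ((hasDerivAt_id t).mul_const (‖g‖ ^ 2)).sub
        ((hasDerivAt_pow 2 t).const_mul (L * ‖g‖ ^ 2 / 2))
      refine HasDerivAt.congr_deriv this ?_
      push_cast
      ring
    exact h3.add h4
  have hanti : AntitoneOn
      (fun t : ℝ => l (θ - t • g) + (t * ‖g‖ ^ 2 - L * ‖g‖ ^ 2 / 2 * t ^ 2))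
      (Set.Icc 0 α) := by
    apply antitoneOn_of_deriv_nonpos (convex_Icc 0 α)
    · exact fun t ht => (hder t ht).continuousAt.continuousWithinAt
    · exact fun t ht => (hder t (interior_subset ht)).differentiableAt.differentiableWithinAt
    · intro t ht
      have ht := interior_subset ht
      rw [(hder t ht).deriv]
      have h1 := hlip _ (hball t ht)
      have e : (θ - t • g) - θ = -(t • g) := by abel
      rw [e, norm_neg, norm_smul, Real.norm_eq_abs, abs_of_nonneg ht.1] at h1
      have h2 := real_inner_le_norm (gradient l (θ - t • g) - g) (-g)
      rw [norm_neg, inner_sub_left, inner_neg_right g g, real_inner_self_eq_norm_sq] at h2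
      have h3 := mul_le_mul_of_nonneg_right h1 (norm_nonneg g)
      nlinarith
  have h := hanti (Set.left_mem_Icc.2 hα.le) (Set.right_mem_Icc.2 hα.le) hα.le
  simp only [zero_smul, sub_zero] at h
  have hD : Δ = ‖g‖ ^ 2 * (2 * α - L * α ^ 2) / 2
      - (‖g‖ * (2 * α - L * α ^ 2) - ε) ^ 2 / (2 * (2 * α - L * α ^ 2)) := by
    have e : 2 * L * α ^ 2 - 4 * α = -(2 * (2 * α - L * α ^ 2)) := by ring
    rw [hΔ, e]
    generalize 2 * α - L * α ^ 2 = c at hc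
    field_simp
    ring
  have hp : 0 ≤ (‖g‖ * (2 * α - L * α ^ 2) - ε) ^ 2 / (2 * (2 * α - L * α ^ 2)) := by
    positivity
  nlinarith
end

section
/- Let n be a positive integer and let F : (Fin n → ℝ) → ℝ be entry-wise concave on the unit cube. Then for every x̄ with all coordinates in [0,1] there exists a binary vector X with every coordinate in {0,1} such that F(X) ≤ F(x̄). -/
/-- `F` is entry-wise concave on the unit cube: for every index `i` and every point `x`
with all coordinates in `[0,1]`, the map `t ↦ F (Function.update x i t)` is concave
on `[0,1]`. -/
def EntrywiseConcave (n : ℕ) (F : (Fin n → ℝ) → ℝ) : Prop :=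
  ∀ (i : Fin n) (x : Fin n → ℝ), (∀ j, x j ∈ Set.Icc (0 : ℝ) 1) →
    ConcaveOn ℝ (Set.Icc (0 : ℝ) 1) (fun t => F (Function.update x i t))

theorem entrywise_concave_rounding
    (n : ℕ) (hn : 0 < n) (F : (Fin n → ℝ) → ℝ) (hF : EntrywiseConcave n F)
    (x : Fin n → ℝ) (hx : ∀ i, x i ∈ Set.Icc (0 : ℝ) 1) :
    ∃ X : Fin n → ℝ, (∀ i, X i = 0 ∨ X i = 1) ∧ F X ≤ F x := by
  have key : ∀ s : Finset (Fin n), ∃ X : Fin n → ℝ, (∀ i, X i ∈ Set.Icc (0 : ℝ) 1) ∧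
      (∀ i ∈ s, X i = 0 ∨ X i = 1) ∧ F X ≤ F x := by
    intro s
    induction s using Finset.induction_on with
    | empty => exact ⟨x, hx, by simp, le_refl _⟩
    | insert a s ha ih =>
      obtain ⟨X, hX, hs, hle⟩ := ih
      have h := (hF a X hX).min_le_of_mem_Icc (x := 0) (y := 1) (z := X a)
        (by simp) (by simp) (hX a)
      simp only [Function.update_eq_self] at h
      have fin : ∀ c : ℝ, (c = 0 ∨ c = 1) → F (Function.update X a c) ≤ F X →
          ∃ X : Fin n → ℝ, (∀ i, X i ∈ Set.Icc (0 : ℝ) 1) ∧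
            (∀ i ∈ insert a s, X i = 0 ∨ X i = 1) ∧ F X ≤ F x := by
        intro c hc hle'
        refine ⟨Function.update X a c, ?_, ?_, hle'.trans hle⟩
        · intro i
          by_cases hi : i = a
          · subst hi
            rcases hc with rfl | rfl <;> simp
          · simpa [Function.update_of_ne hi] using hX i
        · intro i his
          by_cases hi : i = a
          · subst hi
            simpa using hc
          · rw [Function.update_of_ne hi]
            exact hs i (Finset.mem_of_mem_insert_of_ne his hi)
      rcases min_le_iff.mp h with h | h
      · exact fin 0 (Or.inl rfl) h
      · exact fin 1 (Or.inr rfl) h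
  obtain ⟨X, -, h, hle⟩ := key Finset.univ
  exact ⟨X, fun i => h i (Finset.mem_univ i), hle⟩
end

section
/- Let n be a positive integer, let f, g : (Fin n → ℝ) → ℝ both be entry-wise concave on the unit cube, and let β > 0. Suppose that f(X) ≥ 0 for every binary vector X ∈ {0,1}ⁿ, and that for every binary vector X ∈ {0,1}ⁿ either g(X) = 0 or g(X) ≥ 1. If x̄ is a point with all coordinates in [0,1] satisfying f(x̄) + β·g(x̄) < β, then there exists a binary vector X ∈ {0,1}ⁿ such that g(X) = 0 and f(X) ≤ f(x̄) + β·g(x̄). -/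
theorem round_aux (n : ℕ) (f g : (Fin n → ℝ) → ℝ)
    (hf : EntrywiseConcave n f) (hg : EntrywiseConcave n g)
    (β : ℝ) (hβ : 0 < β) (x : Fin n → ℝ) (hx : ∀ i, x i ∈ Set.Icc (0 : ℝ) 1)
    (s : Finset (Fin n)) :
    ∃ X : Fin n → ℝ, (∀ i, X i ∈ Set.Icc (0 : ℝ) 1) ∧ (∀ i ∈ s, X i = 0 ∨ X i = 1) ∧
      f X + β * g X ≤ f x + β * g x := by
  induction s using Finset.induction_on with
  | empty => exact ⟨x, hx, by simp, le_rfl⟩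
  | insert i s _ ih =>
    obtain ⟨Y, hY, hYs, hle⟩ := ih
    have key : ∃ t : ℝ, (t = 0 ∨ t = 1) ∧
        f (Function.update Y i t) + β * g (Function.update Y i t) ≤ f Y + β * g Y := by
      have h0 : (0 : ℝ) ∈ Set.Icc (0 : ℝ) 1 := by simp
      have h1 : (1 : ℝ) ∈ Set.Icc (0 : ℝ) 1 := by simp
      have ha : 0 ≤ 1 - Y i := by linarith [(hY i).2]
      have hb : 0 ≤ Y i := (hY i).1
      have cf := (hf i Y hY).2 h0 h1 ha hb (by ring)
      have cg := (hg i Y hY).2 h0 h1 ha hb (by ring)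
      simp only [smul_eq_mul, mul_zero, mul_one, zero_add, Function.update_eq_self] at cf cg
      by_contra! hcon
      have c0 := hcon 0 (Or.inl rfl)
      have c1 := hcon 1 (Or.inr rfl)
      have cg' := mul_le_mul_of_nonneg_left cg hβ.le
      rcases hb.eq_or_lt with h | h
      · rw [← h] at cf cg'
        linarith
      · have e1 := mul_lt_mul_of_pos_left c1 h
        have e0 := mul_le_mul_of_nonneg_left c0.le ha
        linarith
    obtain ⟨t, ht, hlt⟩ := key
    refine ⟨Function.update Y i t, fun j => ?_, fun j hj => ?_, hlt.trans hle⟩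
    · by_cases h : j = i
      · subst h
        rcases ht with rfl | rfl <;> simp
      · simpa [h] using hY j
    · by_cases h : j = i
      · subst h
        simpa using ht
      · simpa [h] using hYs j (by simpa [h] using hj)

theorem rounding_guarantee
    (n : ℕ) (hn : 0 < n) (f g : (Fin n → ℝ) → ℝ)
    (hf : EntrywiseConcave n f) (hg : EntrywiseConcave n g)
    (β : ℝ) (hβ : 0 < β)
    (hf0 : ∀ X : Fin n → ℝ, (∀ i, X i = 0 ∨ X i = 1) → 0 ≤ f X)
    (hg01 : ∀ X : Fin n → ℝ, (∀ i, X i = 0 ∨ X i = 1) → g X = 0 ∨ 1 ≤ g X)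
    (x : Fin n → ℝ) (hx : ∀ i, x i ∈ Set.Icc (0 : ℝ) 1)
    (hloss : f x + β * g x < β) :
    ∃ X : Fin n → ℝ, (∀ i, X i = 0 ∨ X i = 1) ∧ g X = 0 ∧
      f X ≤ f x + β * g x := by
  obtain ⟨X, _, hX, hle⟩ := round_aux n f g hf hg β hβ x hx Finset.univ
  have hB : ∀ i, X i = 0 ∨ X i = 1 := fun i => hX i (Finset.mem_univ i)
  rcases hg01 X hB with h | h
  · exact ⟨X, hB, h, by rw [h] at hle; linarith⟩
  · have := hf0 X hB
    have := mul_le_mul_of_nonneg_left h hβ.le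
    linarith
end

section
/- Let E be a real inner product space and let n be a positive integer. Let Φ : E → (Fin n → ℝ) be a map whose output always has all coordinates in [0,1]. Let f, g : (Fin n → ℝ) → ℝ both be entry-wise concave on the unit cube, with f(X) ≥ 0 for every binary vector X ∈ {0,1}ⁿ, and with g(X) = 0 or g(X) ≥ 1 for every binary vector X ∈ {0,1}ⁿ. Let β > 0 and define the loss ℓ : E → ℝ by ℓ(θ) = f(Φ(θ)) + β·g(Φ(θ)). Fix θ ∈ E, let L > 0 with 0 < α < 2/L, and suppose ℓ is differentiable with base-point L-Lipschitz gradient on the closed ball of radius α·‖∇ℓ(θ)‖ around θ. Set Δ = (α − Lα²/2)·‖∇ℓ(θ)‖². If ℓ(θ) < β + Δ, then there exists a binary vector X ∈ {0,1}ⁿ with g(X) = 0 and f(X) ≤ ℓ(θ) − Δ. -/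
theorem EntrywiseConcave.round {n : ℕ} {F : (Fin n → ℝ) → ℝ} (hF : EntrywiseConcave n F)
    (x : Fin n → ℝ) (hx : ∀ j, x j ∈ Set.Icc (0 : ℝ) 1) (s : Finset (Fin n)) :
    ∃ X : Fin n → ℝ, (∀ j, X j ∈ Set.Icc (0 : ℝ) 1) ∧ (∀ i ∈ s, X i = 0 ∨ X i = 1) ∧
      F X ≤ F x := by
  classical
  induction s using Finset.induction_on with
  | empty => exact ⟨x, hx, by simp, le_rfl⟩
  | insert a s ha ih =>
    obtain ⟨X, hX, hb, hle⟩ := ih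
    have key := (hF a X hX).min_le_of_mem_Icc (x := 0) (y := 1) (z := X a)
      (by simp) (by simp) (hX a)
    simp only [Function.update_eq_self] at key
    have fin : ∀ t : ℝ, (t = 0 ∨ t = 1) → F (Function.update X a t) ≤ F X →
        ∃ X : Fin n → ℝ, (∀ j, X j ∈ Set.Icc (0 : ℝ) 1) ∧
          (∀ i ∈ insert a s, X i = 0 ∨ X i = 1) ∧ F X ≤ F x := by
      intro t ht h
      refine ⟨Function.update X a t, ?_, ?_, h.trans hle⟩
      · intro j
        by_cases hj : j = a
        · subst hj
          rcases ht with rfl | rfl <;> simp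
        · simpa [Function.update_of_ne hj] using hX j
      · intro i hi
        by_cases hj : i = a
        · subst hj
          simpa using ht
        · rw [Function.update_of_ne hj]
          exact hb i ((Finset.mem_insert.1 hi).resolve_left hj)
    rcases min_le_iff.1 key with h | h
    · exact fin 0 (Or.inl rfl) h
    · exact fin 1 (Or.inr rfl) h

theorem descent_step {E : Type*} [NormedAddCommGroup E] [InnerProductSpace ℝ E] [CompleteSpace E]
    (ℓ : E → ℝ) (θ : E) (L α : ℝ) (hα : 0 < α)
    (hdiff : ∀ θ' : E, ‖θ' - θ‖ ≤ α * ‖gradient ℓ θ‖ → DifferentiableAt ℝ ℓ θ')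
    (hlip : ∀ θ' : E, ‖θ' - θ‖ ≤ α * ‖gradient ℓ θ‖ →
      ‖gradient ℓ θ' - gradient ℓ θ‖ ≤ L * ‖θ' - θ‖) :
    ℓ (θ - α • gradient ℓ θ) ≤ ℓ θ - (α - L * α ^ 2 / 2) * ‖gradient ℓ θ‖ ^ 2 := by
  set G := gradient ℓ θ with hG
  have hn : ∀ t : ℝ, 0 ≤ t → ‖(θ - t • G) - θ‖ = t * ‖G‖ := by
    intro t ht
    rw [show (θ - t • G) - θ = -(t • G) by abel, norm_neg, norm_smul, Real.norm_of_nonneg ht]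
  have hball : ∀ t ∈ Set.Icc 0 α, ‖(θ - t • G) - θ‖ ≤ α * ‖G‖ := by
    intro t ht
    rw [hn t ht.1]
    exact mul_le_mul_of_nonneg_right ht.2 (norm_nonneg _)
  have hd : ∀ t ∈ Set.Icc 0 α, HasDerivAt (fun t : ℝ => ℓ (θ - t • G))
      (- inner ℝ (gradient ℓ (θ - t • G)) G) t := by
    intro t ht
    have h1 := (hdiff _ (hball t ht)).hasGradientAt.hasFDerivAt
    have h2 : HasDerivAt (fun t : ℝ => θ - t • G) (-G) t := by
      simpa using ((hasDerivAt_id t).smul_const G).const_sub θ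
    have h3 := h1.comp_hasDerivAt t h2
    simpa [Function.comp_def] using h3
  have hB : ∀ t : ℝ, HasDerivAt (fun t : ℝ => ℓ θ - (t - L * t ^ 2 / 2) * ‖G‖ ^ 2)
      (-(1 - L * t) * ‖G‖ ^ 2) t := by
    intro t
    have h := ((((hasDerivAt_id t).sub
      ((((hasDerivAt_id t).pow 2).const_mul L).div_const 2)).mul_const (‖G‖ ^ 2)).const_sub (ℓ θ))
    refine h.congr_deriv ?_
    simp
    ring
  refine image_le_of_deriv_right_le_deriv_boundary (a := 0) (b := α)
    (f := fun t : ℝ => ℓ (θ - t • G)) 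
    (B := fun t : ℝ => ℓ θ - (t - L * t ^ 2 / 2) * ‖G‖ ^ 2)
    (fun t ht => (hd t ht).continuousAt.continuousWithinAt)
    (fun t ht => (hd t ⟨ht.1, ht.2.le⟩).hasDerivWithinAt) (by simp)
    (fun t _ => (hB t).continuousAt.continuousWithinAt)
    (fun t _ => (hB t).hasDerivWithinAt) ?_ ⟨hα.le, le_rfl⟩
  intro t ht
  have ht' : t ∈ Set.Icc 0 α := ⟨ht.1, ht.2.le⟩
  have h1 := hlip _ (hball t ht')
  rw [hn t ht.1] at h1
  have h2 := abs_le.1 (abs_real_inner_le_norm (gradient ℓ (θ - t • G) - G) G)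
  rw [inner_sub_left, real_inner_self_eq_norm_sq] at h2
  have h3 := mul_le_mul_of_nonneg_right h1 (norm_nonneg G)
  nlinarith [h2.1]

theorem performance_guarantee_8
    {E : Type*} [NormedAddCommGroup E] [InnerProductSpace ℝ E] [CompleteSpace E]
    (n : ℕ) (hn : 0 < n) (Φ : E → Fin n → ℝ)
    (hΦ : ∀ (θ : E) (i : Fin n), Φ θ i ∈ Set.Icc (0 : ℝ) 1)
    (f g : (Fin n → ℝ) → ℝ)
    (hf : EntrywiseConcave n f) (hg : EntrywiseConcave n g)
    (hf0 : ∀ X : Fin n → ℝ, (∀ i, X i = 0 ∨ X i = 1) → 0 ≤ f X)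
    (hg01 : ∀ X : Fin n → ℝ, (∀ i, X i = 0 ∨ X i = 1) → g X = 0 ∨ 1 ≤ g X)
    (β : ℝ) (hβ : 0 < β)
    (ℓ : E → ℝ) (hℓ : ∀ θ, ℓ θ = f (Φ θ) + β * g (Φ θ))
    (θ : E) (L α : ℝ) (hL : 0 < L) (hα : 0 < α) (hα2 : α < 2 / L)
    (hdiff : ∀ θ' : E, ‖θ' - θ‖ ≤ α * ‖gradient ℓ θ‖ → DifferentiableAt ℝ ℓ θ')
    (hlip : ∀ θ' : E, ‖θ' - θ‖ ≤ α * ‖gradient ℓ θ‖ →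
      ‖gradient ℓ θ' - gradient ℓ θ‖ ≤ L * ‖θ' - θ‖)
    (Δ : ℝ) (hΔ : Δ = (α - L * α ^ 2 / 2) * ‖gradient ℓ θ‖ ^ 2)
    (hloss : ℓ θ < β + Δ) :
    ∃ X : Fin n → ℝ, (∀ i, X i = 0 ∨ X i = 1) ∧ g X = 0 ∧ f X ≤ ℓ θ - Δ := by
  have hd := descent_step ℓ θ L α hα hdiff hlip
  rw [← hΔ, hℓ (θ - α • gradient ℓ θ)] at hd
  have hF : EntrywiseConcave n (fun x => f x + β * g x) := by
    intro i x hx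
    exact (hf i x hx).add ((hg i x hx).smul hβ.le)
  obtain ⟨X, -, hb, hle⟩ := hF.round (Φ (θ - α • gradient ℓ θ)) (hΦ _) Finset.univ
  have hb' : ∀ i, X i = 0 ∨ X i = 1 := fun i => hb i (Finset.mem_univ i)
  have h0 := hf0 X hb'
  rcases hg01 X hb' with h | h
  · refine ⟨X, hb', h, ?_⟩
    rw [h] at hle
    linarith
  · exfalso
    nlinarith
end

section
/- Let E be a real inner product space and let n be a positive integer. Let Φ : E → (Fin n → ℝ) be a map whose output always has all coordinates in [0,1]. Let f, g : (Fin n → ℝ) → ℝ both be entry-wise concave on the unit cube, with f(X) ≥ 0 for every binary vector X ∈ {0,1}ⁿ, and with g(X) = 0 or g(X) ≥ 1 for every binary vector X ∈ {0,1}ⁿ. Let β > 0 and define the loss ℓ : E → ℝ by ℓ(θ) = f(Φ(θ)) + β·g(Φ(θ)). Fix θ ∈ E, let L > 0, and suppose ℓ is differentiable with base-point L-Lipschitz gradient on the closed ball of radius ‖∇ℓ(θ)‖/L around θ. Set Δ = ‖∇ℓ(θ)‖²/(2L). If ℓ(θ) < β + Δ, then there exists a binary vector X ∈ {0,1}ⁿ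 with g(X) = 0 and f(X) ≤ ℓ(θ) − Δ. -/
theorem rounding_aux (n : ℕ) (F : (Fin n → ℝ) → ℝ) (hF : EntrywiseConcave n F)
    (x : Fin n → ℝ) (hx : ∀ j, x j ∈ Set.Icc (0 : ℝ) 1) (s : Finset (Fin n)) :
    ∃ y : Fin n → ℝ, (∀ j, y j ∈ Set.Icc (0 : ℝ) 1) ∧ (∀ j ∈ s, y j = 0 ∨ y j = 1) ∧
      F y ≤ F x := by
  induction s using Finset.induction_on with
  | empty => exact ⟨x, hx, by simp, le_rfl⟩
  | insert a s ha ih =>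
    obtain ⟨y, hy, hys, hle⟩ := ih
    have h := (hF a y hy).min_le_of_mem_Icc (Set.left_mem_Icc.2 zero_le_one)
      (Set.right_mem_Icc.2 zero_le_one) (hy a)
    simp only [Function.update_eq_self] at h
    have key : ∀ c : ℝ, (c = 0 ∨ c = 1) → F (Function.update y a c) ≤ F y →
        ∃ y : Fin n → ℝ, (∀ j, y j ∈ Set.Icc (0 : ℝ) 1) ∧
          (∀ j ∈ insert a s, y j = 0 ∨ y j = 1) ∧ F y ≤ F x := by
      intro c hc hcF
      refine ⟨Function.update y a c, ?_, ?_, hcF.trans hle⟩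
      · intro j
        by_cases hj : j = a
        · subst hj
          rcases hc with rfl | rfl <;> simp
        · simpa [Function.update_of_ne hj] using hy j
      · intro j hjs
        by_cases hj : j = a
        · subst hj
          simpa using hc
        · rw [Function.update_of_ne hj]
          exact hys j (Finset.mem_of_mem_insert_of_ne hjs hj)
    rcases min_le_iff.1 h with h | h
    · exact key 0 (Or.inl rfl) h
    · exact key 1 (Or.inr rfl) h

theorem descent_aux {E : Type*} [NormedAddCommGroup E] [InnerProductSpace ℝ E] [CompleteSpace E]
    (ℓ : E → ℝ) (θ : E) (L : ℝ) (hL : 0 < L)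
    (hdiff : ∀ θ' : E, ‖θ' - θ‖ ≤ ‖gradient ℓ θ‖ / L → DifferentiableAt ℝ ℓ θ')
    (hlip : ∀ θ' : E, ‖θ' - θ‖ ≤ ‖gradient ℓ θ‖ / L →
      ‖gradient ℓ θ' - gradient ℓ θ‖ ≤ L * ‖θ' - θ‖) :
    ∃ θ' : E, ℓ θ' ≤ ℓ θ - ‖gradient ℓ θ‖ ^ 2 / (2 * L) := by
  set G := gradient ℓ θ with hG
  let p : ℝ → E := fun t => θ - t • ((1 / L) • G)
  have hp : ∀ t, 0 ≤ t → ‖p t - θ‖ = t * (‖G‖ / L) := by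
    intro t ht
    simp only [p, sub_sub_cancel_left, norm_neg, norm_smul, Real.norm_eq_abs]
    rw [abs_of_nonneg ht, abs_of_pos (by positivity : 0 < 1 / L)]
    ring
  have hmem : ∀ t ∈ Set.Icc (0 : ℝ) 1, ‖p t - θ‖ ≤ ‖G‖ / L := by
    intro t ht
    rw [hp t ht.1]
    exact mul_le_of_le_one_left (by positivity) ht.2
  have hd : ∀ t ∈ Set.Icc (0 : ℝ) 1, HasDerivAt
      (fun t => ℓ (p t) + ‖G‖ ^ 2 / L * (t - t ^ 2 / 2))
      (inner ℝ (gradient ℓ (p t)) (-((1 / L) • G)) + ‖G‖ ^ 2 / L * (1 - t)) t := by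
    intro t ht
    have h1 : HasDerivAt p (-((1 / L) • G)) t := by
      have := ((hasDerivAt_id t).smul_const ((1 / L) • G)).const_sub θ
      simpa [p] using this
    have h2 := (hdiff (p t) (hmem t ht)).hasGradientAt.hasFDerivAt.comp_hasDerivAt t h1
    have h3 : HasDerivAt (fun t : ℝ => ‖G‖ ^ 2 / L * (t - t ^ 2 / 2))
        (‖G‖ ^ 2 / L * (1 - t)) t := by
      have := ((hasDerivAt_id t).sub (((hasDerivAt_id t).pow 2).div_const 2)).const_mul
        (‖G‖ ^ 2 / L)
      refine this.congr_deriv ?_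
      simp only [id]
      push_cast
      ring
    have h4 := h2.add h3
    rw [InnerProductSpace.toDual_apply_apply] at h4
    exact h4
  have hanti : AntitoneOn (fun t => ℓ (p t) + ‖G‖ ^ 2 / L * (t - t ^ 2 / 2))
      (Set.Icc (0 : ℝ) 1) := by
    apply antitoneOn_of_deriv_nonpos (convex_Icc 0 1)
    · exact fun t ht => (hd t ht).continuousAt.continuousWithinAt
    · exact fun t ht => (hd t (interior_subset ht)).differentiableAt.differentiableWithinAt
    · intro t ht
      have ht := interior_subset ht
      rw [(hd t ht).deriv]
      have e : inner ℝ (gradient ℓ (p t)) (-((1 / L) • G)) =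
          (1 / L) * (inner ℝ (gradient ℓ (p t) - G) (-G) - ‖G‖ ^ 2) := by
        rw [← real_inner_self_eq_norm_sq]
        simp only [inner_neg_right, inner_smul_right, inner_sub_left]
        ring
      have h5 := real_inner_le_norm (gradient ℓ (p t) - G) (-G)
      have h6 := hlip (p t) (hmem t ht)
      rw [hp t ht.1] at h6
      have h7 : L * (t * (‖G‖ / L)) = t * ‖G‖ := by field_simp
      rw [h7] at h6
      rw [norm_neg] at h5
      have h8 := mul_le_mul_of_nonneg_right h6 (norm_nonneg G)
      have e2 : (1 / L) * (inner ℝ (gradient ℓ (p t) - G) (-G) - ‖G‖ ^ 2)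
          + ‖G‖ ^ 2 / L * (1 - t) =
          (1 / L) * (inner ℝ (gradient ℓ (p t) - G) (-G) - t * ‖G‖ * ‖G‖) := by ring
      rw [e, e2]
      exact mul_nonpos_of_nonneg_of_nonpos (by positivity) (by linarith)
  have h := hanti (Set.left_mem_Icc.2 zero_le_one) (Set.right_mem_Icc.2 zero_le_one) zero_le_one
  refine ⟨p 1, ?_⟩
  have h0 : p 0 = θ := by simp [p]
  simp only [h0] at h
  have e : ‖G‖ ^ 2 / (2 * L) = ‖G‖ ^ 2 / L * (1 - 1 ^ 2 / 2) := by field_simp; norm_num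
  rw [e]
  linarith

theorem performance_guarantee_10
    {E : Type*} [NormedAddCommGroup E] [InnerProductSpace ℝ E] [CompleteSpace E]
    (n : ℕ) (hn : 0 < n) (Φ : E → Fin n → ℝ)
    (hΦ : ∀ (θ : E) (i : Fin n), Φ θ i ∈ Set.Icc (0 : ℝ) 1)
    (f g : (Fin n → ℝ) → ℝ)
    (hf : EntrywiseConcave n f) (hg : EntrywiseConcave n g)
    (hf0 : ∀ X : Fin n → ℝ, (∀ i, X i = 0 ∨ X i = 1) → 0 ≤ f X)
    (hg01 : ∀ X : Fin n → ℝ, (∀ i, X i = 0 ∨ X i = 1) → g X = 0 ∨ 1 ≤ g X)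
    (β : ℝ) (hβ : 0 < β)
    (ℓ : E → ℝ) (hℓ : ∀ θ, ℓ θ = f (Φ θ) + β * g (Φ θ))
    (θ : E) (L : ℝ) (hL : 0 < L)
    (hdiff : ∀ θ' : E, ‖θ' - θ‖ ≤ ‖gradient ℓ θ‖ / L → DifferentiableAt ℝ ℓ θ')
    (hlip : ∀ θ' : E, ‖θ' - θ‖ ≤ ‖gradient ℓ θ‖ / L →
      ‖gradient ℓ θ' - gradient ℓ θ‖ ≤ L * ‖θ' - θ‖)
    (Δ : ℝ) (hΔ : Δ = ‖gradient ℓ θ‖ ^ 2 / (2 * L))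
    (hloss : ℓ θ < β + Δ) :
    ∃ X : Fin n → ℝ, (∀ i, X i = 0 ∨ X i = 1) ∧ g X = 0 ∧ f X ≤ ℓ θ - Δ := by
  obtain ⟨θ', hθ'⟩ := descent_aux ℓ θ L hL hdiff hlip
  rw [← hΔ] at hθ'
  have hF : EntrywiseConcave n (fun x => f x + β * g x) := fun i x hx =>
    (hf i x hx).add ((hg i x hx).smul hβ.le)
  obtain ⟨X, -, hX, hle⟩ := rounding_aux n _ hF (Φ θ') (hΦ θ') Finset.univ
  have hX : ∀ i, X i = 0 ∨ X i = 1 := fun i => hX i (Finset.mem_univ i)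
  simp only [← hℓ θ'] at hle
  refine ⟨X, hX, ?_⟩
  rcases hg01 X hX with h | h
  · refine ⟨h, ?_⟩
    rw [h] at hle
    linarith
  · have := hf0 X hX
    have := mul_le_mul_of_nonneg_left h hβ.le
    linarith
end
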